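/- arXiv:2501.11991 — 2 statements merged into one kernel-verified Lean document; each statement's English description precedes it below -/
import Mathlib

section
/- Let k ≥ 2 be an integer. Set φ = (1 - x(t-1))/(2x(t-1)) and γ(x,t) = k/(1 - 3x(t-1)) - (2x(t-1)/(1 - 3x(t-1))²)·(U_k(φ) - U_{k-1}(φ) - 1)/U_k(φ). Then the two-variable generating function G_k(x,t) = Σ_{n≥0} (Σ_{w∈[k]^n} t^{cs(w)}) x^n satisfies G_k(x,t) = 1 + ((1 + 3x(t-1))/((1 - 3x(t-1))(1 + x(t-1)))) · [ 1/(1 - xγ(x,t)) - (2x(t-1)(k+1)/((1 + 3x(t-1))·U_k(φ))) · ( (1 - x(1 + k - U_k(φ))/(1 - 3x(t-1)))/(1 - xγ(x,t)) + U_{k-1}(φ) - 1 ) + kx(t-1) - 1 ], valid wherever the right-hand side is defined. -/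
/-- Evaluation of the Chebyshev polynomial of the second kind `U_n` at a real `x`. -/
noncomputable def chebU (n : ℤ) (x : ℝ) : ℝ := (Polynomial.Chebyshev.U ℝ n).eval x

/-- The cyclic statistic `cs(w)`: the number of indices `0 ≤ i ≤ n-1` with
`|w_{i+1} - w_i| ≤ 1`, where `w_0` is interpreted as `w_n`; equivalently, the number of
cyclically adjacent pairs of letters of `w` differing by at most `1`. -/
def statCS {k n : ℕ} (w : Fin n → Fin k) : ℕ :=
  (Finset.univ.filter fun i : Fin n =>
    |((w ⟨((i : ℕ) + 1) % n, Nat.mod_lt _ i.pos⟩ : ℕ) : ℤ) - ((w i : ℕ) : ℤ)| ≤ 1).card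

/-- `φ = (1 - x(t-1))/(2x(t-1))`. -/
noncomputable def phi (x t : ℝ) : ℝ := (1 - x * (t - 1)) / (2 * x * (t - 1))

/-- `γ(x,t) = k/(1 - 3x(t-1)) - (2x(t-1)/(1 - 3x(t-1))²)·(U_k(φ) - U_{k-1}(φ) - 1)/U_k(φ)`. -/
noncomputable def gam (k : ℕ) (x t : ℝ) : ℝ :=
  (k : ℝ) / (1 - 3 * x * (t - 1)) -
    2 * x * (t - 1) / (1 - 3 * x * (t - 1)) ^ 2 *
      ((chebU (k : ℤ) (phi x t) - chebU ((k : ℤ) - 1) (phi x t) - 1) / chebU (k : ℤ) (phi x t))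

/-!
Since words are read cyclically, the sum over words of length `n ≥ 1` is the trace of `M ^ n`,
where `M` has the entry `t` at pairs of letters at distance at most `1` and the entry `1` elsewhere.
Hence `G_k - 1 + k` is the trace of `(1 - xM)⁻¹`. Let `y = x(t-1)` and let `P` be the adjacency
matrix of the path on `k` vertices. As `M` is `(t-1)(1 + P)` plus the all-ones matrix, `1 - xM` is
`y(2φ - P)` minus a matrix of rank one, and the Sherman–Morrison formula expresses the trace through
`L = 2φ - P` alone.

The recurrence of the Chebyshev polynomials gives `L⁻¹` and `L⁻¹1` explicitly: the trace of `L⁻¹`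
is `∑ U_i U_{k-1-i} / U_k`, the entries of `L⁻¹1` are `(1 - (U_i + U_{k-1-i})/U_k) / (2φ - 2)`, and
`γ` is the sum of the latter divided by `y`. The sums of products that remain telescope, because
`2(X² - 1) U_m U_n` is a difference of two polynomials `T`.
-/

open Polynomial Polynomial.Chebyshev Matrix Finset Topology

section TransferMatrix

variable {ι R : Type*} [Fintype ι] [DecidableEq ι] [CommSemiring R]

theorem pow_succ_apply_eq_sum_prod (M : Matrix ι ι R) (n : ℕ) (a b : ι) :
    (M ^ (n + 1)) a b = ∑ w : Fin n → ι, ∏ i : Fin (n + 1),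
      M ((Fin.cons a w : Fin (n + 1) → ι) i) ((Fin.snoc w b : Fin (n + 1) → ι) i) := by
  induction n generalizing a with
  | zero => simp [Fin.snoc]
  | succ n ih =>
    rw [pow_succ', mul_apply, ← (Fin.consEquiv fun _ : Fin (n + 1) ↦ ι).sum_comp,
      Fintype.sum_prod_type]
    refine sum_congr rfl fun c _ ↦ ?_
    simp only [ih, mul_sum, Fin.prod_univ_succ (n := n + 1), Fin.consEquiv, Equiv.coe_fn_mk,
      Fin.cons_succ, Fin.cons_zero, ← Fin.cons_snoc_eq_snoc_cons]

theorem trace_pow_succ_eq_sum_prod (M : Matrix ι ι R) (n : ℕ) :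
    (M ^ (n + 1)).trace = ∑ w : Fin (n + 1) → ι, ∏ i, M (w i) (w (i + 1)) := by
  rw [trace, ← (Fin.consEquiv fun _ : Fin (n + 1) ↦ ι).sum_comp, Fintype.sum_prod_type]
  simp only [diag_apply, pow_succ_apply_eq_sum_prod, Fin.snoc_eq_cons_rotate,
    finRotate_apply, Fin.consEquiv, Equiv.coe_fn_mk]

end TransferMatrix

section Resolvent

variable {ι 𝕜 : Type*} [Fintype ι] [DecidableEq ι]

theorem inv_sub_vecMulVec [Field 𝕜] {A : Matrix ι ι 𝕜} (hA : IsUnit A) {a b : ι → 𝕜}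
    (h : 1 - b ⬝ᵥ A⁻¹ *ᵥ a ≠ 0) :
    (A - vecMulVec a b)⁻¹
      = A⁻¹ + (1 - b ⬝ᵥ A⁻¹ *ᵥ a)⁻¹ • vecMulVec (A⁻¹ *ᵥ a) (b ᵥ* A⁻¹) := by
  have hdet : IsUnit A.det := (isUnit_iff_isUnit_det A).mp hA
  have hA' : A *ᵥ A⁻¹ *ᵥ a = a := by rw [mulVec_mulVec, mul_nonsing_inv A hdet, one_mulVec]
  refine inv_eq_right_inv ?_
  rw [sub_mul, mul_add, mul_add, mul_nonsing_inv A hdet, Matrix.mul_smul, Matrix.mul_smul,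
    mul_vecMulVec, hA', vecMulVec_mul, vecMulVec_mul_vecMulVec, vecMulVec_smul]
  ext i j
  simp only [Matrix.sub_apply, Matrix.add_apply, Matrix.smul_apply, vecMulVec_apply, smul_eq_mul]
  field_simp
  ring

attribute [local instance] Matrix.linftyOpNormedRing Matrix.linftyOpNormedAlgebra in
theorem eventually_hasSum_trace_pow [NormedField 𝕜] [CompleteSpace 𝕜] (A : Matrix ι ι 𝕜) :
    ∀ᶠ x in 𝓝 (0 : 𝕜), HasSum (fun n ↦ (A ^ n).trace * x ^ n) (1 - x • A)⁻¹.trace := by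
  have : @CompleteSpace (Matrix ι ι 𝕜) PseudoMetricSpace.toUniformSpace :=
    Matrix.instCompleteSpace ι ι 𝕜
  have hnorm : ∀ᶠ x in 𝓝 (0 : 𝕜), ‖x • A‖ < 1 :=
    ((continuous_id.smul continuous_const).norm.tendsto' 0 0 (by simp)).eventually_lt_const one_pos
  filter_upwards [hnorm] with x hx
  have hsum := (summable_geometric_of_norm_lt_one hx).hasSum.map
    (traceAddMonoidHom ι 𝕜) continuous_id.matrix_trace
  rw [inv_eq_right_inv (mul_neg_geom_series _ hx)]
  simpa [Function.comp_def, _root_.smul_pow, mul_comm] using hsum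

end Resolvent

section IntegerIndexedSums

variable {M : Type*} [AddCommMonoid M]

theorem sum_range_intCast_reflect (f : ℤ → M) (k : ℕ) :
    ∑ i ∈ range k, f (k - 1 - i) = ∑ i ∈ range k, f i := by
  rw [← sum_range_reflect]
  refine sum_congr rfl fun i hi ↦ ?_
  rw [mem_range] at hi
  congr 1
  lia

theorem sum_fin_ite_intCast_eq {k : ℕ} {f : ℤ → M} {c : ℤ}
    (h : c ∉ Set.Ico 0 (k : ℤ) → f c = 0) : ∑ j : Fin k, (if j = c then f j else 0) = f c := by
  by_cases hc : c ∈ Set.Ico 0 (k : ℤ)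
  · lift c to ℕ using hc.1
    have hck : c < k := Nat.cast_lt.mp hc.2
    rw [Fintype.sum_eq_single (⟨c, hck⟩ : Fin k) fun j hj ↦
      if_neg fun hjc ↦ hj (Fin.ext (Nat.cast_inj.mp hjc))]
    simp
  · rw [h hc]
    refine sum_eq_zero fun j _ ↦ if_neg ?_
    rintro rfl
    exact hc ⟨Int.natCast_nonneg _, Nat.cast_lt.mpr j.isLt⟩

end IntegerIndexedSums

section Chebyshev

variable (R : Type*) [CommRing R]

theorem chebyshevU_add (m n : ℤ) :
    U R (m + n) = U R m * U R n - U R (m - 1) * U R (n - 1) := by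
  induction m using Polynomial.Chebyshev.induct with
  | zero => simp
  | one => simpa [add_comm] using U_add_one R n
  | add_two m ih₁ ih₀ =>
    linear_combination (norm := ring_nf) 2 * X * ih₁ - ih₀ + U_add_two R (m + n)
      - U R n * U_add_two R m + U R (n - 1) * U_add_one R m
  | neg_add_one m ih₀ ih₁ =>
    linear_combination (norm := ring_nf) 2 * X * ih₀ - ih₁ + U_sub_one R (-m + n)
      - U R n * U_sub_one R (-m) + U R (n - 1) * U_sub_two R (-m)

theorem chebyshevU_sq_add_sq (n : ℤ) :
    U R n ^ 2 + U R (n + 1) ^ 2 - 2 * X * U R n * U R (n + 1) = 1 := by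
  have h := congrArg (comp · (2 * X)) (S_sq_add_S_sq R n)
  simpa only [add_comp, sub_comp, mul_comp, pow_comp, X_comp, one_comp, S_comp_two_mul_X] using h

theorem two_mul_X_sq_sub_one_mul_U_mul_U (m n : ℤ) :
    2 * (X ^ 2 - 1) * (U R m * U R n) = T R (m + n + 2) - T R (m - n) := by
  induction m using Polynomial.Chebyshev.induct with
  | zero =>
    rw [zero_add, zero_sub, T_neg, U_zero]
    linear_combination -2 * one_sub_X_sq_mul_U_eq_pol_in_T R n + T_add_two R n
  | one =>
    rw [← neg_sub n 1, T_neg, U_one]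
    linear_combination (norm := ring_nf) -4 * X * one_sub_X_sq_mul_U_eq_pol_in_T R n
      - T_add_two R (n + 1) + 2 * X * T_add_two R n + T_sub_one R n
  | add_two m ih₁ ih₀ =>
    linear_combination (norm := ring_nf) 2 * X * ih₁ - ih₀
      + 2 * (X ^ 2 - 1) * U R n * U_add_two R m - T_add_two R (m + n + 2) + T_add_two R (m - n)
  | neg_add_one m ih₀ ih₁ =>
    linear_combination (norm := ring_nf) 2 * X * ih₀ - ih₁
      + 2 * (X ^ 2 - 1) * U R n * U_sub_one R (-m) - T_sub_one R (-m + n + 2)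
      + T_sub_one R (-m - n)

theorem two_mul_X_sub_one_mul_sum_U (k : ℕ) :
    2 * (X - 1) * ∑ i ∈ range k, U R i = U R k - U R (k - 1) - 1 := by
  have h (i : ℕ) : 2 * (X - 1) * U R i
      = (U R ((i + 1 : ℕ) : ℤ) - U R (((i + 1 : ℕ) : ℤ) - 1)) - (U R i - U R (i - 1)) := by
    push_cast
    rw [U_add_one, add_sub_cancel_right]
    ring
  rw [mul_sum, sum_congr rfl fun i _ ↦ h i,
    sum_range_sub fun i : ℕ ↦ U R i - U R ((i : ℤ) - 1)]
  simp

theorem two_mul_sum_T_sub_two_mul (k : ℕ) :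
    2 * ∑ i ∈ range k, T R (k - 1 - 2 * i) = 2 * U R (k - 1) := by
  have h (i : ℕ) : 2 * T R (k - 1 - 2 * i)
      = U R (k - 1 - 2 * i) - U R (k - 1 - 2 * (i + 1 : ℕ)) := by
    linear_combination (norm := (push_cast; ring_nf))
      two_mul_T_eq_U_sub_U R (k - 1 - 2 * (i + 1 : ℕ))
  rw [mul_sum, sum_congr rfl fun i _ ↦ h i, sum_range_sub' fun i : ℕ ↦ U R (k - 1 - 2 * i),
    show (k : ℤ) - 1 - 2 * k = -k - 1 by ring, U_neg_sub_one]
  simp [two_mul]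

theorem two_mul_sum_T_two_mul_add_two (k : ℕ) :
    2 * ∑ i ∈ range k, T R (2 * i + 2) = U R (2 * k) - 1 := by
  have h (i : ℕ) : 2 * T R (2 * i + 2) = U R (2 * (i + 1 : ℕ)) - U R (2 * i) := by
    rw [two_mul_T_eq_U_sub_U, Nat.cast_add_one, mul_add_one]
  rw [mul_sum, sum_congr rfl fun i _ ↦ h i, sum_range_sub fun i : ℕ ↦ U R (2 * i)]
  simp

theorem four_mul_X_sq_sub_one_mul_sum_U_sq (k : ℕ) :
    4 * (X ^ 2 - 1) * ∑ i ∈ range k, U R i ^ 2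
      = U R k ^ 2 - U R (k - 1) ^ 2 - 1 - 2 * (k : R[X]) := by
  have h (i : ℕ) : 4 * (X ^ 2 - 1) * U R i ^ 2 = 2 * T R (2 * i + 2) - 2 := by
    have hT := two_mul_X_sq_sub_one_mul_U_mul_U R i i
    rw [← two_mul, sub_self, T_zero] at hT
    linear_combination 2 * hT
  rw [mul_sum, sum_congr rfl fun i _ ↦ h i, sum_sub_distrib, ← mul_sum,
    two_mul_sum_T_two_mul_add_two, two_mul (k : ℤ), chebyshevU_add, sum_const, card_range,
    nsmul_eq_mul]
  ring

theorem four_mul_X_sq_sub_one_mul_sum_U_mul_U (k : ℕ) :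
    4 * (X ^ 2 - 1) * ∑ i ∈ range k, U R i * U R (k - 1 - i)
      = 2 * (k : R[X]) * X * U R k - 2 * (k + 1 : R[X]) * U R (k - 1) := by
  have h (i : ℕ) : 4 * (X ^ 2 - 1) * (U R i * U R (k - 1 - i))
      = 2 * T R (k + 1) - 2 * T R (k - 1 - 2 * i) := by
    linear_combination (norm := ring_nf) 2 * two_mul_X_sq_sub_one_mul_U_mul_U R (k - 1 - i) i
  have hT : 2 * T R (k + 1) = 2 * X * U R k - 2 * U R (k - 1) := by
    linear_combination (norm := ring_nf) two_mul_T_eq_U_sub_U R (k - 1) + U_add_one R k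
  rw [mul_sum, sum_congr rfl fun i _ ↦ h i, sum_sub_distrib, ← mul_sum, ← mul_sum,
    two_mul_sum_T_sub_two_mul, sum_const, card_range, nsmul_eq_mul, mul_left_comm, hT]
  ring

end Chebyshev

section PathGraph

variable {R : Type*} [CommRing R]

/-- The Green function of the recurrence `2X f i = f (i - 1) + f (i + 1)` with `f (-1) = f k = 0`,
up to the factor `U k`: a solution vanishing at `-1` glued at `i = j` to one vanishing at `k`. -/
noncomputable def pathGreen (R : Type*) [CommRing R] (k i j : ℤ) : R[X] :=
  U R (min i j) * U R (k - 1 - max i j)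

theorem two_mul_X_mul_pathGreen_sub (k i j : ℤ) :
    2 * X * pathGreen R k i j - pathGreen R k (i - 1) j - pathGreen R k (i + 1) j
      = if i = j then U R k else 0 := by
  unfold pathGreen
  rcases lt_trichotomy i j with h | rfl | h
  · rw [if_neg h.ne, min_eq_left h.le, min_eq_left (by lia), min_eq_left (by lia),
      max_eq_right h.le, max_eq_right (by lia), max_eq_right (by lia), U_add_one]
    ring
  · have hU := chebyshevU_add R (i + 1) (k - 1 - i)
    rw [U_add_one, show i + 1 + (k - 1 - i) = k by ring, add_sub_cancel_right] at hU
    rw [if_pos rfl, min_self, max_self, min_eq_left (by lia), min_eq_right (by lia),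
      max_eq_right (by lia), max_eq_left (by lia), hU, sub_add_eq_sub_sub]
    ring
  · rw [if_neg h.ne', min_eq_right h.le, min_eq_right (by lia), min_eq_right (by lia),
      max_eq_left h.le, max_eq_left (by lia), max_eq_left (by lia)]
    linear_combination (norm := ring_nf) -U R j * U_add_one R (k - 1 - i)

open scoped Classical in
/-- The characteristic matrix of the path graph on `k` vertices, evaluated at `2φ`
so that `φ` is the variable of the Chebyshev polynomials. -/
noncomputable def pathCharMatrix (k : ℕ) (φ : R) : Matrix (Fin k) (Fin k) R :=
  (2 * φ) • 1 - (SimpleGraph.pathGraph k).adjMatrix R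

theorem transpose_pathCharMatrix (k : ℕ) (φ : R) :
    (pathCharMatrix k φ)ᵀ = pathCharMatrix k φ := by
  simp [pathCharMatrix]

open scoped Classical in
theorem pathCharMatrix_mulVec {k : ℕ} (φ : R) {f : ℤ → R} (h₀ : f (-1) = 0) (hk : f k = 0)
    (i : Fin k) :
    (pathCharMatrix k φ *ᵥ fun j ↦ f j) i = 2 * φ * f i - f (i - 1) - f (i + 1) := by
  have hadj (j : Fin k) : (if (SimpleGraph.pathGraph k).Adj i j then f j else 0)
      = (if (j : ℤ) = i - 1 then f j else 0) + if (j : ℤ) = i + 1 then f j else 0 := by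
    rw [SimpleGraph.pathGraph_adj]
    grind
  have hi := i.isLt
  have hpred := sum_fin_ite_intCast_eq (k := k) (f := f) (c := i - 1) fun h ↦ by
    rwa [show (i : ℤ) - 1 = -1 by simp only [Set.mem_Ico] at h; lia]
  have hsucc := sum_fin_ite_intCast_eq (k := k) (f := f) (c := i + 1) fun h ↦ by
    rwa [show (i : ℤ) + 1 = k by simp only [Set.mem_Ico] at h; lia]
  rw [pathCharMatrix, sub_mulVec, smul_mulVec, one_mulVec, Pi.sub_apply, Pi.smul_apply,
    smul_eq_mul, sub_sub, ← hpred, ← hsucc, ← sum_add_distrib]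
  simp only [mulVec, dotProduct, SimpleGraph.adjMatrix_apply, ite_mul, one_mul, zero_mul, hadj]

theorem pathCharMatrix_mul_pathGreen (k : ℕ) (φ : R) :
    pathCharMatrix k φ * of (fun i j : Fin k ↦ (pathGreen R k i j).eval φ)
      = (U R k).eval φ • 1 := by
  ext i j
  have hj := j.isLt
  have h := pathCharMatrix_mulVec φ (f := fun i ↦ (pathGreen R k i j).eval φ)
    (by rw [pathGreen, min_eq_left (by lia)]; simp)
    (by rw [pathGreen, max_eq_left (by lia)]; simp) i
  have hG := congrArg (eval φ) (two_mul_X_mul_pathGreen_sub (R := R) k i j)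
  simp only [eval_sub, eval_mul, eval_ofNat, eval_X] at hG
  refine h.trans (hG.trans ?_)
  simp [Matrix.one_apply, apply_ite (eval φ), Fin.ext_iff]

theorem pathCharMatrix_mulVec_U (k : ℕ) (φ : R) :
    pathCharMatrix k φ *ᵥ (fun i ↦ (U R k - (U R i + U R (k - 1 - i))).eval φ)
      = fun _ ↦ (2 * φ - 2) * (U R k).eval φ := by
  ext i
  rw [pathCharMatrix_mulVec φ (f := fun i ↦ (U R k - (U R i + U R (k - 1 - i))).eval φ)
    (by simp) (by simp)]
  simp only [eval_sub, eval_add]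
  have h₁ := congrArg (eval φ) (U_add_one R i)
  have h₂ := congrArg (eval φ) (U_add_one R (k - 1 - i))
  simp only [eval_sub, eval_mul, eval_ofNat, eval_X] at h₁ h₂
  rw [show (k : ℤ) - 1 - (i - 1) = k - 1 - i + 1 by ring,
    show (k : ℤ) - 1 - (i + 1) = k - 1 - i - 1 by ring, h₁, h₂]
  ring

end PathGraph

section PathResolvent

variable {𝕜 : Type*} [Field 𝕜] {k : ℕ} {φ : 𝕜}

theorem pathCharMatrix_mul_inv_smul_pathGreen (hU : (U 𝕜 k).eval φ ≠ 0) :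
    pathCharMatrix k φ *
      (((U 𝕜 k).eval φ)⁻¹ • of fun i j : Fin k ↦ (pathGreen 𝕜 k i j).eval φ) = 1 := by
  rw [Matrix.mul_smul, pathCharMatrix_mul_pathGreen, inv_smul_smul₀ hU]

theorem isUnit_pathCharMatrix (hU : (U 𝕜 k).eval φ ≠ 0) : IsUnit (pathCharMatrix k φ) :=
  .of_mul_eq_one _ (pathCharMatrix_mul_inv_smul_pathGreen hU)

theorem trace_inv_pathCharMatrix (hU : (U 𝕜 k).eval φ ≠ 0) :
    4 * (φ ^ 2 - 1) * (pathCharMatrix k φ)⁻¹.trace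
      = 2 * k * φ - 2 * (k + 1) * (U 𝕜 (k - 1)).eval φ / (U 𝕜 k).eval φ := by
  have h := congrArg (eval φ) (four_mul_X_sq_sub_one_mul_sum_U_mul_U 𝕜 k)
  simp only [eval_sub, eval_add, eval_mul, eval_pow, eval_ofNat, eval_one, eval_X, eval_natCast,
    eval_finsetSum] at h
  rw [inv_eq_right_inv (pathCharMatrix_mul_inv_smul_pathGreen hU), trace_smul, smul_eq_mul, trace]
  simp only [diag_apply, of_apply, pathGreen, min_self, max_self, eval_mul]
  rw [Fin.sum_univ_eq_sum_range fun i ↦ (U 𝕜 i).eval φ * (U 𝕜 (k - 1 - i)).eval φ,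
    mul_left_comm, h]
  field_simp

/-- The row sums of the inverse of `pathCharMatrix k φ`, which are also its column sums. -/
noncomputable def pathRowSum (k : ℕ) (φ : 𝕜) : Fin k → 𝕜 :=
  (pathCharMatrix k φ)⁻¹ *ᵥ 1

theorem pathRowSum_eq (hU : (U 𝕜 k).eval φ ≠ 0) (hφ : 2 * φ - 2 ≠ 0) :
    pathRowSum k φ = fun i : Fin k ↦
      (1 - ((U 𝕜 i).eval φ + (U 𝕜 (k - 1 - i)).eval φ) / (U 𝕜 k).eval φ) / (2 * φ - 2) := by
  have hL := (isUnit_iff_isUnit_det _).mp (isUnit_pathCharMatrix hU)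
  have h : (1 : Fin k → 𝕜) = pathCharMatrix k φ *ᵥ ((2 * φ - 2) * (U 𝕜 k).eval φ)⁻¹ •
      fun i : Fin k ↦ (U 𝕜 k - (U 𝕜 i + U 𝕜 (k - 1 - i))).eval φ := by
    rw [mulVec_smul, pathCharMatrix_mulVec_U]
    exact funext fun _ ↦ (inv_mul_cancel₀ (mul_ne_zero hφ hU)).symm
  rw [pathRowSum, h, mulVec_mulVec, nonsing_inv_mul _ hL, one_mulVec]
  ext i
  simp only [Pi.smul_apply, eval_sub, eval_add, smul_eq_mul]
  field_simp

theorem one_vecMul_inv_pathCharMatrix (k : ℕ) (φ : 𝕜) :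
    1 ᵥ* (pathCharMatrix k φ)⁻¹ = pathRowSum k φ := by
  rw [← mulVec_transpose, transpose_nonsing_inv, transpose_pathCharMatrix, pathRowSum]

theorem one_dotProduct_pathRowSum (hU : (U 𝕜 k).eval φ ≠ 0) (hφ : 2 * φ - 2 ≠ 0) :
    1 ⬝ᵥ pathRowSum k φ = k / (2 * φ - 2)
      - 2 * ((U 𝕜 k).eval φ - (U 𝕜 (k - 1)).eval φ - 1) / ((2 * φ - 2) ^ 2 * (U 𝕜 k).eval φ) := by
  have hS := congrArg (eval φ) (two_mul_X_sub_one_mul_sum_U 𝕜 k)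
  simp only [eval_sub, eval_mul, eval_ofNat, eval_one, eval_X, eval_finsetSum] at hS
  rw [pathRowSum_eq hU hφ, one_dotProduct, ← sum_div,
    Fin.sum_univ_eq_sum_range fun i ↦
      1 - ((U 𝕜 i).eval φ + (U 𝕜 (k - 1 - i)).eval φ) / (U 𝕜 k).eval φ,
    sum_sub_distrib, ← sum_div, sum_add_distrib,
    sum_range_intCast_reflect (fun i ↦ (U 𝕜 i).eval φ), ← hS]
  simp only [sum_const, card_range, nsmul_one]
  field_simp
  ring

theorem pathRowSum_dotProduct_self_eq_sum (hU : (U 𝕜 k).eval φ ≠ 0) (hφ : 2 * φ - 2 ≠ 0) :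
    (2 * φ - 2) ^ 2 * (U 𝕜 k).eval φ ^ 2 * pathRowSum k φ ⬝ᵥ pathRowSum k φ
      = k * (U 𝕜 k).eval φ ^ 2 - 4 * (U 𝕜 k).eval φ * ∑ i ∈ range k, (U 𝕜 i).eval φ
        + 2 * ∑ i ∈ range k, (U 𝕜 i).eval φ ^ 2
        + 2 * ∑ i ∈ range k, (U 𝕜 i).eval φ * (U 𝕜 (k - 1 - i)).eval φ := by
  have hsq (i : ℕ) : (2 * φ - 2) ^ 2 * (U 𝕜 k).eval φ ^ 2 *
        ((1 - ((U 𝕜 i).eval φ + (U 𝕜 (k - 1 - i)).eval φ) / (U 𝕜 k).eval φ) / (2 * φ - 2)) ^ 2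
      = (U 𝕜 k).eval φ ^ 2
        - 2 * (U 𝕜 k).eval φ * ((U 𝕜 i).eval φ + (U 𝕜 (k - 1 - i)).eval φ)
        + ((U 𝕜 i).eval φ ^ 2 + (U 𝕜 (k - 1 - i)).eval φ ^ 2)
        + 2 * ((U 𝕜 i).eval φ * (U 𝕜 (k - 1 - i)).eval φ) := by
    generalize 2 * φ - 2 = c at hφ
    field_simp
    ring
  simp only [pathRowSum_eq hU hφ, dotProduct, ← sq, mul_sum, hsq]
  rw [Fin.sum_univ_eq_sum_range fun i ↦ (U 𝕜 k).eval φ ^ 2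
        - 2 * (U 𝕜 k).eval φ * ((U 𝕜 i).eval φ + (U 𝕜 (k - 1 - i)).eval φ)
        + ((U 𝕜 i).eval φ ^ 2 + (U 𝕜 (k - 1 - i)).eval φ ^ 2)
        + 2 * ((U 𝕜 i).eval φ * (U 𝕜 (k - 1 - i)).eval φ)]
  simp only [sum_add_distrib, sum_sub_distrib, ← mul_sum,
    sum_range_intCast_reflect fun i ↦ (U 𝕜 i).eval φ,
    sum_range_intCast_reflect fun i ↦ (U 𝕜 i).eval φ ^ 2, sum_const, card_range, nsmul_eq_mul]
  ring

theorem pathRowSum_dotProduct_self (hU : (U 𝕜 k).eval φ ≠ 0) (hφ : 2 * φ - 2 ≠ 0) :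
    (2 * φ - 2) ^ 3 * (2 * φ + 2) * (U 𝕜 k).eval φ ^ 2 * pathRowSum k φ ⬝ᵥ pathRowSum k φ
      = ((2 * φ - 2) * k * (U 𝕜 k).eval φ ^ 2
          - 4 * (U 𝕜 k).eval φ * ((U 𝕜 k).eval φ - (U 𝕜 (k - 1)).eval φ - 1)) * (2 * φ + 2)
        + 2 * ((U 𝕜 k).eval φ ^ 2 - (U 𝕜 (k - 1)).eval φ ^ 2 - 1 - 2 * k
          + 2 * k * φ * (U 𝕜 k).eval φ - 2 * (k + 1) * (U 𝕜 (k - 1)).eval φ) := by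
  have hS := congrArg (eval φ) (two_mul_X_sub_one_mul_sum_U 𝕜 k)
  have hQ := congrArg (eval φ) (four_mul_X_sq_sub_one_mul_sum_U_sq 𝕜 k)
  have hW := congrArg (eval φ) (four_mul_X_sq_sub_one_mul_sum_U_mul_U 𝕜 k)
  simp only [eval_sub, eval_add, eval_mul, eval_pow, eval_ofNat, eval_one, eval_X, eval_natCast,
    eval_finsetSum] at hS hQ hW
  linear_combination (2 * φ - 2) * (2 * φ + 2) * pathRowSum_dotProduct_self_eq_sum hU hφ
    - 4 * (U 𝕜 k).eval φ * (2 * φ + 2) * hS + 2 * hQ + 2 * hW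

end PathResolvent

section CyclicStaircase

/-- The transfer matrix of `statCS`: the step from `i` to `j` has weight `t` if `|j - i| ≤ 1` and
weight `1` otherwise. -/
def csTransfer {R : Type*} [One R] (k : ℕ) (t : R) : Matrix (Fin k) (Fin k) R :=
  of fun i j ↦ if |((j : ℕ) : ℤ) - ((i : ℕ) : ℤ)| ≤ 1 then t else 1

theorem sum_pow_statCS_eq_trace {R : Type*} [CommSemiring R] (k n : ℕ) (t : R) :
    ∑ w : Fin (n + 1) → Fin k, t ^ statCS w = (csTransfer k t ^ (n + 1)).trace := by
  rw [trace_pow_succ_eq_sum_prod]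
  refine sum_congr rfl fun w _ ↦ ?_
  have hsucc (i : Fin (n + 1)) : (⟨(i + 1) % (n + 1), Nat.mod_lt _ i.pos⟩ : Fin (n + 1)) = i + 1 :=
    Fin.ext (by simp [Fin.val_add])
  simp only [statCS, hsucc, csTransfer, of_apply, prod_ite, prod_const, one_pow, mul_one]

theorem eventually_hasSum_statCS {𝕜 : Type*} [NormedField 𝕜] [CompleteSpace 𝕜] (k : ℕ) (t : 𝕜) :
    ∀ᶠ x in 𝓝 (0 : 𝕜), HasSum (fun n : ℕ ↦ (∑ w : Fin n → Fin k, t ^ statCS w) * x ^ n)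
      (1 - k + (1 - x • csTransfer k t)⁻¹.trace) := by
  filter_upwards [eventually_hasSum_trace_pow (csTransfer k t)] with x hx
  -- `n = 0` counts the single empty word, whereas the zeroth power has trace `k`.
  refine ((hasSum_ite_eq 0 (1 - k : 𝕜)).add hx).congr_fun ?_
  rintro (_ | n)
  · simp [statCS]
  · simp [sum_pow_statCS_eq_trace]

theorem one_sub_smul_csTransfer {R : Type*} [CommRing R] (k : ℕ) {x t φ : R}
    (h : x * (t - 1) * (2 * φ + 1) = 1) :
    1 - x • csTransfer k t = (x * (t - 1)) • pathCharMatrix k φ - vecMulVec (x • 1) 1 := by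
  ext i j
  simp only [pathCharMatrix, csTransfer, Matrix.sub_apply, Matrix.smul_apply, Matrix.one_apply,
    vecMulVec_apply, SimpleGraph.adjMatrix_apply, SimpleGraph.pathGraph_adj, of_apply,
    Pi.smul_apply, Pi.one_apply, smul_eq_mul, abs_le, Fin.ext_iff]
  split_ifs <;> first | lia | linear_combination -h | ring

variable {𝕜 : Type*} [Field 𝕜] {k : ℕ} {x t φ y : 𝕜}

theorem trace_inv_one_sub_smul_csTransfer (h : x * (t - 1) * (2 * φ + 1) = 1)
    (hU : (U 𝕜 k).eval φ ≠ 0)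
    (hD : 1 - x * ((1 ⬝ᵥ pathRowSum k φ) / (x * (t - 1))) ≠ 0) :
    (1 - x • csTransfer k t)⁻¹.trace
      = (pathCharMatrix k φ)⁻¹.trace / (x * (t - 1))
        + x / (1 - x * ((1 ⬝ᵥ pathRowSum k φ) / (x * (t - 1))))
          * (pathRowSum k φ ⬝ᵥ pathRowSum k φ / (x * (t - 1)) ^ 2) := by
  have hy : x * (t - 1) ≠ 0 := left_ne_zero_of_mul_eq_one h
  have hL := isUnit_pathCharMatrix hU
  have hyL : IsUnit ((x * (t - 1)) • pathCharMatrix k φ) := hL.smul (Units.mk0 _ hy)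
  have hinv : ((x * (t - 1)) • pathCharMatrix k φ)⁻¹ = (x * (t - 1))⁻¹ • (pathCharMatrix k φ)⁻¹ :=
    inv_smul' _ (Units.mk0 _ hy) ((isUnit_iff_isUnit_det _).mp hL)
  have hdot : 1 ⬝ᵥ ((x * (t - 1)) • pathCharMatrix k φ)⁻¹ *ᵥ (x • 1)
      = x * ((1 ⬝ᵥ pathRowSum k φ) / (x * (t - 1))) := by
    rw [hinv, mulVec_smul, smul_mulVec, dotProduct_smul, dotProduct_smul, smul_eq_mul,
      smul_eq_mul, div_eq_inv_mul, pathRowSum]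
  rw [one_sub_smul_csTransfer k h, inv_sub_vecMulVec hyL (hdot ▸ hD), hdot,
    hinv, trace_add, trace_smul, trace_smul, trace_vecMulVec, vecMul_smul, smul_mulVec,
    mulVec_smul, one_vecMul_inv_pathCharMatrix, ← pathRowSum]
  simp only [smul_dotProduct, dotProduct_smul, smul_eq_mul]
  field_simp

theorem one_sub_add_trace_inv_pathCharMatrix_div (h : y * (2 * φ + 1) = 1)
    (hU : (U 𝕜 k).eval φ ≠ 0) (h₁ : 1 - 3 * y ≠ 0) (h₂ : 1 + y ≠ 0) (h₃ : 1 + 3 * y ≠ 0) :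
    1 - k + (pathCharMatrix k φ)⁻¹.trace / y
      = 1 + (1 + 3 * y) / ((1 - 3 * y) * (1 + y)) *
        (k * y - 2 * y * (k + 1) / ((1 + 3 * y) * (U 𝕜 k).eval φ) * (U 𝕜 (k - 1)).eval φ) := by
  have hy : y ≠ 0 := left_ne_zero_of_mul_eq_one h
  have hτ : (1 - 3 * y) * (1 + y) * ((pathCharMatrix k φ)⁻¹.trace / y)
      = k * (1 - y) - 2 * y * (k + 1) * (U 𝕜 (k - 1)).eval φ / (U 𝕜 k).eval φ := by
    have hφ : (1 - 3 * y) * (1 + y) = 4 * (φ ^ 2 - 1) * y ^ 2 := by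
      linear_combination -(2 * φ * y + 1 - y) * h
    calc
      _ = y * (4 * (φ ^ 2 - 1) * (pathCharMatrix k φ)⁻¹.trace) := by rw [hφ]; field_simp
      _ = _ := by rw [trace_inv_pathCharMatrix hU]; linear_combination k * h
  generalize (pathCharMatrix k φ)⁻¹.trace / y = τ at *
  field_simp at hτ ⊢
  linear_combination hτ

theorem one_dotProduct_pathRowSum_div (h : y * (2 * φ + 1) = 1)
    (hU : (U 𝕜 k).eval φ ≠ 0) (h₁ : 1 - 3 * y ≠ 0) :
    (1 ⬝ᵥ pathRowSum k φ) / y = k / (1 - 3 * y) - 2 * y / (1 - 3 * y) ^ 2 *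
      (((U 𝕜 k).eval φ - (U 𝕜 (k - 1)).eval φ - 1) / (U 𝕜 k).eval φ) := by
  have hy : y ≠ 0 := left_ne_zero_of_mul_eq_one h
  have hφ : 2 * φ - 2 = (1 - 3 * y) / y := by
    rw [eq_div_iff hy]
    linear_combination h
  rw [one_dotProduct_pathRowSum hU (hφ ▸ div_ne_zero h₁ hy), hφ]
  field_simp

theorem pathRowSum_dotProduct_self_div (h : y * (2 * φ + 1) = 1)
    (hU : (U 𝕜 k).eval φ ≠ 0) (h₁ : 1 - 3 * y ≠ 0) (h₂ : 1 + y ≠ 0) (h₃ : 1 + 3 * y ≠ 0) :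
    pathRowSum k φ ⬝ᵥ pathRowSum k φ / y ^ 2
      = (1 + 3 * y) / ((1 - 3 * y) * (1 + y)) * ((1 ⬝ᵥ pathRowSum k φ) / y
        - 2 * y * (k + 1) / ((1 + 3 * y) * (U 𝕜 k).eval φ)
          * ((1 ⬝ᵥ pathRowSum k φ) / y - (1 + k - (U 𝕜 k).eval φ) / (1 - 3 * y))) := by
  have hy : y ≠ 0 := left_ne_zero_of_mul_eq_one h
  have hφ : y * (2 * φ - 2) = 1 - 3 * y := by linear_combination h
  have hφ' : y * (2 * φ + 2) = 1 + y := by linear_combination h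
  have hν := pathRowSum_dotProduct_self hU (right_ne_zero_of_mul (hφ ▸ h₁))
  have hcassini := congrArg (eval φ) (chebyshevU_sq_add_sq 𝕜 (k - 1))
  simp only [eval_sub, eval_add, eval_mul, eval_pow, eval_ofNat, eval_one, eval_X,
    sub_add_cancel] at hcassini
  rw [one_dotProduct_pathRowSum_div h hU h₁]
  generalize pathRowSum k φ ⬝ᵥ pathRowSum k φ = ν at *
  generalize (U 𝕜 k).eval φ = p at *
  generalize (U 𝕜 (k - 1)).eval φ = q at *
  have hν' : (1 - 3 * y) ^ 3 * (1 + y) * p ^ 2 * (ν / y ^ 2)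
      = ((1 - 3 * y) * k * p ^ 2 - 4 * y * p * (p - q - 1)) * (1 + y)
        + 2 * y ^ 2 * (p ^ 2 - q ^ 2 - 1 - 2 * k)
        + 2 * y * (1 - y) * k * p - 4 * y ^ 2 * (k + 1) * q := by
    rw [← hφ, ← hφ']
    field_simp
    linear_combination y * hν + 2 * k * p * h
  have hcassini' : y * p ^ 2 - (1 - y) * p * q + y * q ^ 2 = y := by
    linear_combination y * hcassini + p * q * h
  generalize ν / y ^ 2 = ν' at *
  field_simp
  linear_combination hν' - 2 * y * hcassini'

end CyclicStaircase

section PhiGamma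

variable {k : ℕ} {x t : ℝ}

theorem mul_two_mul_phi_add_one (hy : x * (t - 1) ≠ 0) : x * (t - 1) * (2 * phi x t + 1) = 1 := by
  rw [phi, mul_assoc 2 x]
  generalize x * (t - 1) = y at hy
  field_simp
  ring

theorem gam_eq_one_dotProduct_pathRowSum_div (hy : x * (t - 1) ≠ 0)
    (h₁ : 1 - 3 * (x * (t - 1)) ≠ 0) (hU : chebU k (phi x t) ≠ 0) :
    gam k x t = (1 ⬝ᵥ pathRowSum k (phi x t)) / (x * (t - 1)) := by
  rw [one_dotProduct_pathRowSum_div (mul_two_mul_phi_add_one hy) hU h₁, gam,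
    mul_assoc 3 x, mul_assoc 2 x, chebU, chebU]

end PhiGamma

/-- The two-variable generating function `G_k(x,t) = Σ_{n≥0} (Σ_{w∈[k]^n} t^{cs(w)}) x^n`
satisfies the stated closed-form identity, as an identity of formal series, i.e. for all
(sufficiently small) `x` at which the right-hand side is defined. -/
theorem gf_of_cyclic_staircase_statistic (k : ℕ) (hk : 2 ≤ k) (t : ℝ) :
    ∃ ε > 0, ∀ x : ℝ, |x| < ε →
      x * (t - 1) ≠ 0 →
      1 - 3 * x * (t - 1) ≠ 0 →
      1 + x * (t - 1) ≠ 0 →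
      1 + 3 * x * (t - 1) ≠ 0 →
      chebU (k : ℤ) (phi x t) ≠ 0 →
      1 - x * gam k x t ≠ 0 →
      ∑' n : ℕ, (∑ w : Fin n → Fin k, t ^ statCS w) * x ^ n =
        1 + (1 + 3 * x * (t - 1)) / ((1 - 3 * x * (t - 1)) * (1 + x * (t - 1))) *
          (1 / (1 - x * gam k x t) -
            2 * x * (t - 1) * (k + 1) / ((1 + 3 * x * (t - 1)) * chebU (k : ℤ) (phi x t)) *
              ((1 - x * ((1 + k - chebU (k : ℤ) (phi x t)) / (1 - 3 * x * (t - 1)))) /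
                  (1 - x * gam k x t) +
                chebU ((k : ℤ) - 1) (phi x t) - 1) +
            k * x * (t - 1) - 1) := by
  obtain ⟨ε, hε, hsum⟩ := Metric.eventually_nhds_iff.mp (eventually_hasSum_statCS k t)
  refine ⟨ε, hε, fun x hx hy h₁ h₂ h₃ hU hD ↦ ?_⟩
  have hφ := mul_two_mul_phi_add_one hy
  simp only [mul_assoc 3 x, mul_assoc 2 x, mul_assoc (k : ℝ) x] at *
  have hγ := gam_eq_one_dotProduct_pathRowSum_div hy h₁ hU
  rw [(hsum (by rwa [Real.dist_0_eq_abs])).tsum_eq,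
    trace_inv_one_sub_smul_csTransfer hφ hU (hγ ▸ hD), ← add_assoc,
    one_sub_add_trace_inv_pathCharMatrix_div hφ hU h₁ h₂ h₃,
    pathRowSum_dotProduct_self_div hφ hU h₁ h₂ h₃, ← hγ, chebU, chebU]
  generalize (1 + 3 * (x * (t - 1))) / ((1 - 3 * (x * (t - 1))) * (1 + x * (t - 1))) = a
  field_simp
  ring
end

section
/- Let k ≥ 2 be an integer and let E_k(x) = Σ_{n≥0} (number of cyclic staircase words in [k]^n) x^n be the generating function of cyclic staircase words over k. Then E_k(x) = 1 + kx(1+3x)/((1+x)(1-3x)) - 2(k+1)x·U_{k-1}((1-x)/(2x))/((1+x)(1-3x)·U_k((1-x)/(2x))), valid wherever the right-hand side is defined (x ∉ {0, -1, 1/3} and U_k((1-x)/(2x)) ≠ 0). -/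
/-- A word `w ∈ [k]^n` (encoded as `Fin n → Fin k`) is a cyclic staircase word if
`|w_{i+1} - w_i| ≤ 1` for every `1 ≤ i ≤ n-1` and also `|w_n - w_1| ≤ 1`; equivalently,
every pair of cyclically adjacent letters differs by at most `1`. -/
def IsCyclicStaircase {k n : ℕ} (w : Fin n → Fin k) : Prop :=
  ∀ i : Fin n,
    |((w ⟨((i : ℕ) + 1) % n, Nat.mod_lt _ i.pos⟩ : ℕ) : ℤ) - ((w i : ℕ) : ℤ)| ≤ 1

/-!
Closed walks of length `n ≥ 1` in a graph with adjacency matrix `A` are counted by `tr (Aⁿ)`, so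
`∑ tr (Aⁿ) xⁿ = tr (1 - x A)⁻¹`, which by Jacobi's formula is `z p'(z) / p(z)`, where `p` is the
characteristic polynomial of `A` and `z = 1 / x`. For cyclic staircase words `A` is the tridiagonal
matrix of ones, whose characteristic polynomial is `U_k((z - 1) / 2)` by the three-term recurrence,
and `(1 - y²) U_k'(y) = (k + 1) U_{k-1}(y) - k y U_k(y)` eliminates the derivative.
-/

section ClosedWalks

variable {ι R : Type*} [Fintype ι] [DecidableEq ι] [CommSemiring R]

theorem trace_pow_mul_eq_sum (A B : Matrix ι ι R) (n : ℕ) :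
    (A ^ n * B).trace = ∑ w : Fin (n + 1) → ι,
      (∏ i : Fin n, A (w i.castSucc) (w i.succ)) * B (w (Fin.last n)) (w 0) := by
  induction n generalizing B with
  | zero =>
    rw [← (Equiv.funUnique (Fin 1) ι).symm.sum_comp]
    simp [Matrix.trace]
  | succ n ih =>
    rw [pow_succ, mul_assoc, ih, ← (Fin.snocEquiv fun _ : Fin (n + 2) => ι).sum_comp,
      Fintype.sum_prod_type_right]
    refine Finset.sum_congr rfl fun w _ => ?_
    simp only [Matrix.mul_apply, Finset.mul_sum, Fin.prod_univ_castSucc, Fin.snocEquiv_apply,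
      Fin.snoc_castSucc, Fin.succ_castSucc, Fin.succ_last, Fin.snoc_last, Fin.snoc_apply_zero,
      mul_assoc]

theorem trace_pow_succ_eq_sum (A : Matrix ι ι R) (n : ℕ) :
    (A ^ (n + 1)).trace = ∑ w : Fin (n + 1) → ι, ∏ i, A (w i) (w (i + 1)) := by
  simp [pow_succ, trace_pow_mul_eq_sum, Fin.prod_univ_castSucc]

theorem card_closedWalks_eq_trace (r : ι → ι → Prop) [DecidableRel r] (n : ℕ) :
    (Nat.card {w : Fin (n + 1) → ι | ∀ i, r (w i) (w (i + 1))} : R) =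
      ((Matrix.of fun i j => if r i j then (1 : R) else 0) ^ (n + 1)).trace := by
  simp [trace_pow_succ_eq_sum, Finset.prod_ite_zero, Fintype.card_subtype]

end ClosedWalks

section LogarithmicDerivative

open Polynomial Matrix

variable {n R : Type*} [Fintype n] [DecidableEq n] [CommRing R]

theorem det_scalar_X_add_map_C {M : Matrix n n R} (hM : IsUnit M.det) :
    (scalar n X + M.map C).det = C M.det * (1 + (X : R[X]) • M⁻¹.map C).det := by
  rw [show C M.det = (M.map C).det from RingHom.map_det C M, ← det_mul, mul_add, mul_one,
    mul_smul_comm, ← Matrix.map_mul, mul_nonsing_inv _ hM, Matrix.map_one _ C_0 C_1,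
    add_comm, scalar_apply, smul_one_eq_diagonal]

theorem eval_derivative_charpoly (A : Matrix n n R) {z : R}
    (hz : IsUnit (scalar n z - A).det) :
    A.charpoly.derivative.eval z = (scalar n z - A).det * (scalar n z - A)⁻¹.trace := by
  have hshift : A.charpoly.comp (X + C z) = (scalar n X + (scalar n z - A).map C).det := by
    rw [← charpoly_sub_scalar, charpoly, charmatrix, ← neg_sub A, sub_eq_add_neg,
      Matrix.map_neg _ fun _ => C_neg]
    rfl
  rw [det_scalar_X_add_map_C hz] at hshift
  simpa [derivative_comp, derivative_det_one_add_X_smul] using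
    congr_arg (fun p => (derivative p).eval 0) hshift

variable {K : Type*} [Field K]

theorem scalar_inv_sub (A : Matrix n n K) {x : K} (hx : x ≠ 0) :
    scalar n x⁻¹ - A = x⁻¹ • (1 - x • A) := by
  rw [smul_sub, inv_smul_smul₀ hx, smul_one_eq_diagonal, scalar_apply]

theorem eval_charpoly_inv_ne_zero {A : Matrix n n K} {x : K} (hx : x ≠ 0)
    (hA : IsUnit (1 - x • A)) : A.charpoly.eval x⁻¹ ≠ 0 := by
  rw [isUnit_iff_isUnit_det] at hA
  rw [eval_charpoly, scalar_inv_sub A hx, det_smul]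
  exact mul_ne_zero (pow_ne_zero _ (inv_ne_zero hx)) hA.ne_zero

theorem trace_inv_one_sub_smul {A : Matrix n n K} {x : K} (hx : x ≠ 0)
    (hA : IsUnit (1 - x • A)) :
    (1 - x • A)⁻¹.trace =
      x⁻¹ * (A.charpoly.derivative.eval x⁻¹ / A.charpoly.eval x⁻¹) := by
  have hdet := eval_charpoly_inv_ne_zero hx hA
  rw [eval_charpoly] at hdet
  have hinv : (1 - x • A)⁻¹ = x⁻¹ • (scalar n x⁻¹ - A)⁻¹ := by
    refine inv_eq_left_inv ?_
    rw [smul_mul_assoc, ← mul_smul_comm, ← scalar_inv_sub A hx, nonsing_inv_mul _ hdet.isUnit]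
  rw [hinv, trace_smul, smul_eq_mul, eval_derivative_charpoly A hdet.isUnit, eval_charpoly,
    mul_div_cancel_left₀ _ hdet]

end LogarithmicDerivative

section GeometricSeries

open Matrix

attribute [local instance] Matrix.linftyOpNormedRing Matrix.linftyOpNormedAlgebra

theorem hasSum_trace_pow_mul_pow {n 𝕜 : Type*} [Fintype n] [DecidableEq n] [NormedField 𝕜]
    [CompleteSpace 𝕜] {A : Matrix n n 𝕜} {x : 𝕜} (hx : ‖x • A‖ < 1) :
    HasSum (fun m => (A ^ m).trace * x ^ m) (1 - x • A)⁻¹.trace := by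
  -- Instance search does not identify the uniform structures of the matrix topology and the norm.
  have : HasSummableGeomSeries (Matrix n n 𝕜) :=
    @instHasSummableGeomSeriesOfCompleteSpace _ _ (Matrix.instCompleteSpace n n 𝕜)
  have hsum : HasSum (fun m => (x • A) ^ m) (1 - x • A)⁻¹ := by
    rw [inv_eq_left_inv (geom_series_mul_neg _ hx)]
    exact (summable_geometric_of_norm_lt_one hx).hasSum
  simpa [_root_.smul_pow, Function.comp_def, mul_comm] using
    hsum.map (traceAddMonoidHom n 𝕜) continuous_id.matrix_trace

end GeometricSeries

section Tridiagonal

open Polynomial Matrix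

/-- The `n × n` tridiagonal Toeplitz matrix with `a` on the diagonal, `b` just above it and `c` just
below it. Its determinants satisfy a three-term recurrence in `n`, the source of the Chebyshev
polynomials. -/
def tridiagonalToeplitz {R : Type*} [Zero R] (n : ℕ) (a b c : R) : Matrix (Fin n) (Fin n) R :=
  .of fun i j =>
    if (i : ℕ) = j then a else if (i : ℕ) + 1 = j then b else if (i : ℕ) = j + 1 then c else 0

variable {R : Type*} [CommRing R]

theorem tridiagonalToeplitz_submatrix_succ (n : ℕ) (a b c : R) :
    (tridiagonalToeplitz (n + 1) a b c).submatrix Fin.succ Fin.succ =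
      tridiagonalToeplitz n a b c := by
  ext i j
  simp [tridiagonalToeplitz]

theorem det_tridiagonalToeplitz_minor (n : ℕ) (a b c : R) :
    ((tridiagonalToeplitz (n + 2) a b c).submatrix Fin.succ (Fin.succAbove 1)).det =
      c * (tridiagonalToeplitz n a b c).det := by
  have hminor : (tridiagonalToeplitz (n + 2) a b c).submatrix (Fin.succ ∘ Fin.succ)
      (Fin.succAbove 1 ∘ Fin.succ) = tridiagonalToeplitz n a b c := by
    ext i j
    simp [tridiagonalToeplitz]
  rw [det_succ_column_zero, Fin.sum_univ_succ]
  simp only [submatrix_submatrix, Fin.succAbove_zero, hminor]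
  simp [tridiagonalToeplitz]

theorem det_tridiagonalToeplitz_add_two (n : ℕ) (a b c : R) :
    (tridiagonalToeplitz (n + 2) a b c).det =
      a * (tridiagonalToeplitz (n + 1) a b c).det - b * c * (tridiagonalToeplitz n a b c).det := by
  rw [det_succ_row_zero, Fin.sum_univ_succ, Fin.sum_univ_succ]
  have hdiag : tridiagonalToeplitz (n + 2) a b c 0 0 = a := by simp [tridiagonalToeplitz]
  have hupper : tridiagonalToeplitz (n + 2) a b c 0 1 = b := by simp [tridiagonalToeplitz]
  have hzero (j : Fin n) : tridiagonalToeplitz (n + 2) a b c 0 j.succ.succ = 0 := by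
    simp [tridiagonalToeplitz]
  simp only [Fin.succAbove_zero, Fin.succ_zero_eq_one, tridiagonalToeplitz_submatrix_succ,
    det_tridiagonalToeplitz_minor, hdiag, hupper, hzero, mul_zero, zero_mul,
    Finset.sum_const_zero, Fin.val_zero, Fin.val_one, pow_zero, pow_one]
  ring

theorem det_tridiagonalToeplitz (n : ℕ) (a : R) {b c : R} (hbc : b * c = 1) :
    (tridiagonalToeplitz n a b c).det = (Chebyshev.S R n).eval a := by
  induction n using Nat.twoStepInduction with
  | zero => simp
  | one => simp [tridiagonalToeplitz]
  | more n ih₀ ih₁ =>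
    rw [det_tridiagonalToeplitz_add_two, ih₀, ih₁, hbc]
    simp [Chebyshev.S_add_two]

theorem charmatrix_tridiagonalToeplitz (n : ℕ) (a b c : R) :
    charmatrix (tridiagonalToeplitz n a b c) = tridiagonalToeplitz n (X - C a) (-C b) (-C c) := by
  ext1 i j
  simp only [charmatrix_apply, diagonal_apply, tridiagonalToeplitz, of_apply, Fin.ext_iff]
  split_ifs <;> simp

theorem charpoly_tridiagonalToeplitz (n : ℕ) (a : R) {b c : R} (hbc : b * c = 1) :
    (tridiagonalToeplitz n a b c).charpoly = (Chebyshev.S R n).comp (X - C a) := by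
  rw [charpoly, charmatrix_tridiagonalToeplitz,
    det_tridiagonalToeplitz _ _ (by rw [neg_mul_neg, ← C_mul, hbc, C_1]),
    ← Chebyshev.map_S C, eval_map, Polynomial.comp]

theorem one_sub_X_sq_mul_derivative_U (n : ℤ) :
    (1 - X ^ 2) * derivative (Chebyshev.U R n) =
      ((n : R[X]) + 1) * Chebyshev.U R (n - 1) - (n : R[X]) * X * Chebyshev.U R n := by
  have h := Chebyshev.add_one_mul_T_eq_poly_in_U (R := R) n
  rw [Chebyshev.T_eq_U_sub_X_mul_U, Chebyshev.U_add_one, add_sub_cancel_right] at h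
  linear_combination h

end Tridiagonal

section Staircase

open Polynomial Matrix

attribute [local instance] Matrix.linftyOpNormedRing Matrix.linftyOpNormedAlgebra

/-- The transfer matrix of staircase words over `[k]`: the entry at `(i, j)` is `1` if the letter
`j` may follow the letter `i` and `0` otherwise. -/
def staircaseMatrix (k : ℕ) : Matrix (Fin k) (Fin k) ℝ :=
  .of fun i j => if |((j : ℕ) : ℤ) - ((i : ℕ) : ℤ)| ≤ 1 then 1 else 0

theorem isCyclicStaircase_iff {k n : ℕ} {w : Fin (n + 1) → Fin k} :
    IsCyclicStaircase w ↔ ∀ i, |((w (i + 1) : ℕ) : ℤ) - ((w i : ℕ) : ℤ)| ≤ 1 := by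
  have hsucc (i : Fin (n + 1)) : ⟨(i + 1) % (n + 1), Nat.mod_lt _ i.pos⟩ = i + 1 :=
    Fin.ext (by simp [Fin.val_add])
  simp only [IsCyclicStaircase, hsucc]

theorem card_isCyclicStaircase_succ (k n : ℕ) :
    (Nat.card {w : Fin (n + 1) → Fin k | IsCyclicStaircase w} : ℝ) =
      (staircaseMatrix k ^ (n + 1)).trace := by
  simp only [isCyclicStaircase_iff]
  exact card_closedWalks_eq_trace (fun i j : Fin k => |((j : ℕ) : ℤ) - ((i : ℕ) : ℤ)| ≤ 1) n

theorem card_isCyclicStaircase_zero (k : ℕ) :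
    Nat.card {w : Fin 0 → Fin k | IsCyclicStaircase w} = 1 := by
  simp [IsCyclicStaircase]

theorem norm_staircaseMatrix_le (k : ℕ) : ‖staircaseMatrix k‖ ≤ 3 := by
  have hrow (i : Fin k) : ∑ j, ‖staircaseMatrix k i j‖₊ ≤ 3 := by
    have hcard : (Finset.univ.filter fun j : Fin k => |((j : ℕ) : ℤ) - ((i : ℕ) : ℤ)| ≤ 1).card ≤
        (Finset.Icc ((i : ℤ) - 1) (i + 1)).card :=
      Finset.card_le_card_of_injOn (fun j => (j : ℤ)) (fun j hj => by grind)
        (fun j _ l _ h => by grind)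
    have hIcc : (Finset.Icc ((i : ℤ) - 1) (i + 1)).card = 3 := by
      rw [Int.card_Icc]
      omega
    simpa [staircaseMatrix, apply_ite nnnorm] using mod_cast hcard.trans_eq hIcc
  rw [linfty_opNorm_def]
  exact_mod_cast Finset.sup_le fun i _ => hrow i

theorem staircaseMatrix_eq_tridiagonalToeplitz (k : ℕ) :
    staircaseMatrix k = tridiagonalToeplitz k 1 1 1 := by
  ext i j
  simp only [staircaseMatrix, tridiagonalToeplitz, of_apply, abs_le]
  split_ifs <;> first | rfl | omega

theorem charpoly_staircaseMatrix (k : ℕ) :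
    (staircaseMatrix k).charpoly = (Chebyshev.U ℝ k).comp (C (1 / 2) * (X - 1)) := by
  rw [staircaseMatrix_eq_tridiagonalToeplitz, charpoly_tridiagonalToeplitz k 1 (one_mul 1),
    Chebyshev.S_eq_U_comp_half_mul_X, comp_assoc]
  simp

theorem norm_smul_staircaseMatrix_lt_one (k : ℕ) {x : ℝ} (hx : |x| < 1 / 3) :
    ‖x • staircaseMatrix k‖ < 1 :=
  calc ‖x • staircaseMatrix k‖ = |x| * ‖staircaseMatrix k‖ := norm_smul x _
    _ ≤ |x| * 3 := by gcongr; exact norm_staircaseMatrix_le k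
    _ < 1 := by linarith

theorem isUnit_one_sub_smul_staircaseMatrix (k : ℕ) {x : ℝ} (hx : |x| < 1 / 3) :
    IsUnit (1 - x • staircaseMatrix k) :=
  isUnit_one_sub_of_norm_lt_one (norm_smul_staircaseMatrix_lt_one k hx)

theorem hasSum_card_isCyclicStaircase (k : ℕ) {x : ℝ} (hx : |x| < 1 / 3) :
    HasSum (fun n => (Nat.card {w : Fin n → Fin k | IsCyclicStaircase w} : ℝ) * x ^ n)
      (1 - k + (1 - x • staircaseMatrix k)⁻¹.trace) := by
  have htrace := hasSum_trace_pow_mul_pow (norm_smul_staircaseMatrix_lt_one k hx)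
  rw [← hasSum_nat_add_iff' 1] at htrace ⊢
  simp only [card_isCyclicStaircase_succ]
  convert htrace using 1
  simp only [Finset.sum_range_one, pow_zero, mul_one, card_isCyclicStaircase_zero, Nat.cast_one,
    trace_one, Fintype.card_fin]
  ring

end Staircase

section GeneratingFunction

open Polynomial Matrix

theorem eval_charpoly_staircaseMatrix_inv (k : ℕ) {x : ℝ} (hx : x ≠ 0) :
    (staircaseMatrix k).charpoly.eval x⁻¹ = chebU k ((1 - x) / (2 * x)) := by
  have hy : 2⁻¹ * (x⁻¹ - 1) = (1 - x) / (2 * x) := by field_simp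
  simp [charpoly_staircaseMatrix, chebU, eval_comp, hy]

theorem eval_derivative_charpoly_staircaseMatrix_inv (k : ℕ) {x : ℝ} (hx : x ≠ 0) :
    (staircaseMatrix k).charpoly.derivative.eval x⁻¹ * ((1 + x) * (1 - 3 * x)) =
      x * (k * (1 - x) * chebU k ((1 - x) / (2 * x)) -
        2 * (k + 1) * x * chebU (k - 1) ((1 - x) / (2 * x))) := by
  set y := (1 - x) / (2 * x) with hy
  have hxy : 2 * x * y = 1 - x := by rw [hy]; field_simp
  have hderiv : (staircaseMatrix k).charpoly.derivative.eval x⁻¹ =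
      (Chebyshev.U ℝ k).derivative.eval y / 2 := by
    have hy' : 2⁻¹ * (x⁻¹ - 1) = y := by rw [hy]; field_simp
    simp [charpoly_staircaseMatrix, derivative_comp, hy', inv_mul_eq_div]
  have hode : (1 - y ^ 2) * (Chebyshev.U ℝ k).derivative.eval y =
      (k + 1) * chebU (k - 1) y - k * y * chebU k y := by
    simpa [chebU] using congr_arg (eval y) (one_sub_X_sq_mul_derivative_U (R := ℝ) k)
  rw [hderiv]
  linear_combination -2 * x ^ 2 * hode +
    (k * x * chebU k y - (Chebyshev.U ℝ k).derivative.eval y / 2 * (1 - x + 2 * x * y)) * hxy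

theorem gf_of_cyclic_staircase_words_general (k : ℕ) {x : ℝ} (hx0 : x ≠ 0) (hx : |x| < 1 / 3) :
    HasSum (fun n => (Nat.card {w : Fin n → Fin k | IsCyclicStaircase w} : ℝ) * x ^ n)
      (1 + k * x * (1 + 3 * x) / ((1 + x) * (1 - 3 * x)) -
        2 * (k + 1) * x * chebU ((k : ℤ) - 1) ((1 - x) / (2 * x)) /
          ((1 + x) * (1 - 3 * x) * chebU (k : ℤ) ((1 - x) / (2 * x)))) := by
  have hunit := isUnit_one_sub_smul_staircaseMatrix k hx
  have hU := eval_charpoly_inv_ne_zero hx0 hunit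
  have hderiv := eval_derivative_charpoly_staircaseMatrix_inv k hx0
  obtain ⟨hlower, hupper⟩ := abs_lt.mp hx
  have hx1 : 1 + x ≠ 0 := by linarith
  have hx3 : 1 - x * 3 ≠ 0 := by linarith
  -- `field_simp` looks for the nonvanishing of `1 - 3 * x` in the form `1 - x * 3`.
  rw [mul_comm 3 x] at hderiv ⊢
  convert hasSum_card_isCyclicStaircase k hx using 1
  rw [trace_inv_one_sub_smul hx0 hunit, eq_div_of_mul_eq (mul_ne_zero hx1 hx3) hderiv]
  rw [eval_charpoly_staircaseMatrix_inv k hx0] at hU ⊢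
  generalize chebU k ((1 - x) / (2 * x)) = u at hU ⊢
  generalize chebU (k - 1) ((1 - x) / (2 * x)) = v
  field_simp
  ring

end GeneratingFunction

/-- The generating function `E_k(x) = Σ_{n≥0} (#cyclic staircase words in [k]^n) xⁿ` equals
`1 + kx(1+3x)/((1+x)(1-3x)) - 2(k+1)x·U_{k-1}((1-x)/(2x))/((1+x)(1-3x)·U_k((1-x)/(2x)))`,
wherever the right-hand side is defined (for sufficiently small `x`). -/
theorem gf_of_cyclic_staircase_words (k : ℕ) (hk : 2 ≤ k) :
    ∃ ε > 0, ∀ x : ℝ, |x| < ε →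
      x ≠ 0 →
      x ≠ -1 →
      x ≠ 1 / 3 →
      chebU (k : ℤ) ((1 - x) / (2 * x)) ≠ 0 →
      ∑' n : ℕ, (Nat.card {w : Fin n → Fin k | IsCyclicStaircase w} : ℝ) * x ^ n =
        1 + k * x * (1 + 3 * x) / ((1 + x) * (1 - 3 * x)) -
          2 * (k + 1) * x * chebU ((k : ℤ) - 1) ((1 - x) / (2 * x)) /
            ((1 + x) * (1 - 3 * x) * chebU (k : ℤ) ((1 - x) / (2 * x))) := by
  exact ⟨1 / 3, by norm_num, fun x hx hx0 _ _ _ =>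
    (gf_of_cyclic_staircase_words_general k hx0 hx).tsum_eq⟩
end
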